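/- Let c₂ > 0, let h ∈ ℝ, let S₁, S₂, S₃, S₄ > 0, let 0 < c_min ≤ c_max, and let D ⊆ ℝ with −1 ∉ D. Suppose z_max ∈ D satisfies |(1−z)/(1+z)| ≤ |(1−z_max)/(1+z_max)| for all z ∈ D, and that δ_max := |(1−z_max)/(1+z_max)| ≥ 1. For reals c and z define the 4×4 symmetric matrix Ψ̃(c,z) = HᵀSH − GᵀSG, where S = diag(S₁, S₂, S₃, S₄), H is the 4×4 matrix with rows (0, c, 1, 0), (1−z, 0, 0, 0), (0, 0, 0, 1−c₂h), (0, −c₂, 1, 0), and G is the 4×4 matrix with rows (1+z, 0, 0, 0), (0, −c, 1, 0), (0, c₂, 1, 0), (0, 0, 0, 1+c₂h). If Ψ̃(c_min, z_max) and Ψ̃(c_max, z_max) are negative definite, then Ψ̃(c, z) is negative definite for every c ∈ [c_min, c_max] and every z ∈ D. -/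

import Mathlib

/-!
The quadratic form of `Ψ̃(c,z)` depends on `c` through a quadratic polynomial with leading
coefficient `(S₁ - S₂) ξ₁²`, and on `z` only through
`(S₂ ρ(z)² - S₁) ((1 + z) ξ₀)²`, where `ρ(z) = (1 - z) / (1 + z)`.

When `S₂ ≤ S₁` the form is convex in `c`, so negativity passes from the two extreme speeds to every
speed in between. Rescaling `ξ₀` by `(1 + z) / (1 + z_max)` then bounds the form at `z` by the form
at `z_max`, because `|ρ(z)| ≤ |ρ(z_max)|`. Finally, the `(0, 0)` entry of `Ψ̃(c,z_max)` is negative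
exactly when `S₂ ρ(z_max)² < S₁`, so that `S₂ ≤ S₁` follows from `|ρ(z_max)| ≥ 1`.
-/

open Matrix

/-- A real square matrix `M` is negative definite if `ξᵀMξ < 0` for every nonzero `ξ`. -/
def NegDef {n : ℕ} (M : Matrix (Fin n) (Fin n) ℝ) : Prop :=
  ∀ ξ : Fin n → ℝ, ξ ≠ 0 → ξ ⬝ᵥ M.mulVec ξ < 0

theorem dotProduct_transpose_mul_diagonal_mul_mulVec {m n R : Type*} [Fintype m] [DecidableEq m]
    [Fintype n] [CommSemiring R] (A : Matrix m n R) (s : m → R) (ξ : n → R) :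
    ξ ⬝ᵥ (Aᵀ * diagonal s * A) *ᵥ ξ = ∑ i, s i * (A *ᵥ ξ) i ^ 2 := by
  rw [← mulVec_mulVec, ← mulVec_mulVec, dotProduct_mulVec, vecMul_transpose]
  refine Finset.sum_congr rfl fun i _ => ?_
  rw [mulVec_diagonal]
  ring

theorem convexOn_quadratic {𝕜 : Type*} [Field 𝕜] [LinearOrder 𝕜] [IsStrictOrderedRing 𝕜] {a : 𝕜}
    (ha : 0 ≤ a) (b c : 𝕜) : ConvexOn 𝕜 Set.univ fun x => a * x ^ 2 + b * x + c :=
  ((even_two.convexOn_pow.smul ha).add ((LinearMap.mulLeft 𝕜 b).convexOn convex_univ)).add_const c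

namespace NegDef

theorem diag_neg {n : ℕ} {M : Matrix (Fin n) (Fin n) ℝ} (hM : NegDef M) (i : Fin n) :
    M i i < 0 := by
  simpa using hM (Pi.single i 1) (by simp)

theorem of_forall_le {m n : ℕ} {M : Matrix (Fin m) (Fin m) ℝ} {N : Matrix (Fin n) (Fin n) ℝ}
    (hN : NegDef N) (T : (Fin m → ℝ) → Fin n → ℝ) (hT : ∀ ξ, T ξ = 0 → ξ = 0)
    (hle : ∀ ξ, ξ ⬝ᵥ M *ᵥ ξ ≤ T ξ ⬝ᵥ N *ᵥ T ξ) : NegDef M :=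
  fun ξ hξ => (hle ξ).trans_lt (hN (T ξ) (mt (hT ξ) hξ))

theorem of_convexOn {n : ℕ} {E : Type*} [AddCommGroup E] [Module ℝ E] {s : Set E}
    {M : E → Matrix (Fin n) (Fin n) ℝ} {x y t : E}
    (hconv : ∀ ξ, ConvexOn ℝ s fun u => ξ ⬝ᵥ M u *ᵥ ξ) (hxs : x ∈ s) (hys : y ∈ s)
    (hx : NegDef (M x)) (hy : NegDef (M y)) (ht : t ∈ segment ℝ x y) : NegDef (M t) :=
  fun ξ hξ => ((hconv ξ).le_on_segment hxs hys ht).trans_lt (max_lt (hx ξ hξ) (hy ξ hξ))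

end NegDef

/-- The reflection coefficient `ρ(z) = (1 - z) / (1 + z)` of the boundary condition, with the junk
value `ρ(-1) = 0`. -/
noncomputable def reflectionCoeff (z : ℝ) : ℝ :=
  (1 - z) / (1 + z)

theorem reflectionCoeff_mul_one_add {z : ℝ} (hz : z ≠ -1) :
    reflectionCoeff z * (1 + z) = 1 - z :=
  div_mul_cancel₀ _ fun h => hz (by linarith)

/-- The matrix `H`, whose rows are the quantities weighted positively in `Ψ̃`. -/
def inflowMatrix (c₂ h c z : ℝ) : Matrix (Fin 4) (Fin 4) ℝ :=
  !![0, c, 1, 0;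
     1 - z, 0, 0, 0;
     0, 0, 0, 1 - c₂ * h;
     0, -c₂, 1, 0]

/-- The matrix `G`, whose rows are the quantities weighted negatively in `Ψ̃`. -/
def outflowMatrix (c₂ h c z : ℝ) : Matrix (Fin 4) (Fin 4) ℝ :=
  !![1 + z, 0, 0, 0;
     0, -c, 1, 0;
     0, c₂, 1, 0;
     0, 0, 0, 1 + c₂ * h]

/-- The stability matrix `Ψ̃(c,z) = HᵀSH - GᵀSG`. The weights are indexed from `0`, so `S i` is
the weight `Sᵢ₊₁` of the paper. -/
def psiTilde (c₂ h : ℝ) (S : Fin 4 → ℝ) (c z : ℝ) : Matrix (Fin 4) (Fin 4) ℝ :=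
  (inflowMatrix c₂ h c z)ᵀ * diagonal S * inflowMatrix c₂ h c z -
    (outflowMatrix c₂ h c z)ᵀ * diagonal S * outflowMatrix c₂ h c z

section PsiTilde

variable {c₂ h c z : ℝ} {S : Fin 4 → ℝ}

theorem dotProduct_psiTilde_mulVec (c₂ h : ℝ) (S : Fin 4 → ℝ) (c z : ℝ) (ξ : Fin 4 → ℝ) :
    ξ ⬝ᵥ psiTilde c₂ h S c z *ᵥ ξ =
      S 0 * ((c * ξ 1 + ξ 2) ^ 2 - ((1 + z) * ξ 0) ^ 2) +
      S 1 * (((1 - z) * ξ 0) ^ 2 - (-c * ξ 1 + ξ 2) ^ 2) +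
      S 2 * (((1 - c₂ * h) * ξ 3) ^ 2 - (c₂ * ξ 1 + ξ 2) ^ 2) +
      S 3 * ((-c₂ * ξ 1 + ξ 2) ^ 2 - ((1 + c₂ * h) * ξ 3) ^ 2) := by
  rw [psiTilde, sub_mulVec, dotProduct_sub, dotProduct_transpose_mul_diagonal_mul_mulVec,
    dotProduct_transpose_mul_diagonal_mul_mulVec]
  simp only [inflowMatrix, outflowMatrix, mulVec, dotProduct, Fin.sum_univ_four, of_apply, cons_val,
    zero_mul, zero_add, one_mul, add_zero]
  ring

theorem psiTilde_zero_zero (c₂ h : ℝ) (S : Fin 4 → ℝ) (c z : ℝ) :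
    psiTilde c₂ h S c z 0 0 = S 1 * (1 - z) ^ 2 - S 0 * (1 + z) ^ 2 := by
  rw [sub_eq_neg_add]
  simpa using dotProduct_psiTilde_mulVec c₂ h S c z (Pi.single 0 1)

theorem convexOn_dotProduct_psiTilde_mulVec (hS_le : S 1 ≤ S 0) (ξ : Fin 4 → ℝ) :
    ConvexOn ℝ Set.univ fun c => ξ ⬝ᵥ psiTilde c₂ h S c z *ᵥ ξ := by
  have hlead : 0 ≤ (S 0 - S 1) * ξ 1 ^ 2 := mul_nonneg (sub_nonneg.2 hS_le) (sq_nonneg _)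
  refine (convexOn_quadratic hlead (2 * (S 0 + S 1) * ξ 1 * ξ 2)
    (ξ ⬝ᵥ psiTilde c₂ h S 0 z *ᵥ ξ)).congr fun c _ => ?_
  simp only [dotProduct_psiTilde_mulVec]
  ring

theorem ne_neg_one_of_negDef_psiTilde (hS_nonneg : 0 ≤ S 1) (hΨ : NegDef (psiTilde c₂ h S c z)) :
    z ≠ -1 := by
  rintro rfl
  have hdiag := hΨ.diag_neg 0
  rw [psiTilde_zero_zero] at hdiag
  linarith

theorem mul_reflectionCoeff_sq_lt_of_negDef_psiTilde (hz : z ≠ -1)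
    (hΨ : NegDef (psiTilde c₂ h S c z)) : S 1 * reflectionCoeff z ^ 2 < S 0 := by
  have hdiag := hΨ.diag_neg 0
  rw [psiTilde_zero_zero, ← reflectionCoeff_mul_one_add hz, mul_pow, ← mul_assoc,
    ← sub_mul] at hdiag
  exact sub_neg.1 (neg_of_mul_neg_left hdiag (sq_nonneg _))

theorem weight_one_le_weight_zero_of_negDef_psiTilde (hS_nonneg : 0 ≤ S 1)
    (hρ : 1 ≤ |reflectionCoeff z|) (hΨ : NegDef (psiTilde c₂ h S c z)) : S 1 ≤ S 0 :=
  calc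
    S 1 ≤ S 1 * reflectionCoeff z ^ 2 :=
      le_mul_of_one_le_right hS_nonneg ((one_le_sq_iff_one_le_abs _).2 hρ)
    _ ≤ S 0 := (mul_reflectionCoeff_sq_lt_of_negDef_psiTilde
      (ne_neg_one_of_negDef_psiTilde hS_nonneg hΨ) hΨ).le

theorem NegDef.psiTilde_of_abs_reflectionCoeff_le {w : ℝ} (hS_nonneg : 0 ≤ S 1) (hz : z ≠ -1)
    (hρ : |reflectionCoeff z| ≤ |reflectionCoeff w|) (hΨ : NegDef (psiTilde c₂ h S c w)) :
    NegDef (psiTilde c₂ h S c z) := by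
  have hw : w ≠ -1 := ne_neg_one_of_negDef_psiTilde hS_nonneg hΨ
  have hz' : 1 + z ≠ 0 := fun h0 => hz (by linarith)
  have hw' : 1 + w ≠ 0 := fun h0 => hw (by linarith)
  refine hΨ.of_forall_le (fun ξ => ![(1 + z) / (1 + w) * ξ 0, ξ 1, ξ 2, ξ 3]) ?_ fun ξ => ?_
  · intro ξ hξ
    simpa [funext_iff, Fin.forall_fin_succ, hz', hw'] using hξ
  · have hscale : (1 + w) * ((1 + z) / (1 + w) * ξ 0) = (1 + z) * ξ 0 := by
      field_simp
    have hreflected : S 1 * (reflectionCoeff z * (1 + z) * ξ 0) ^ 2 ≤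
        S 1 * (reflectionCoeff w * ((1 + z) * ξ 0)) ^ 2 := by
      rw [mul_assoc (reflectionCoeff z), mul_pow, mul_pow (reflectionCoeff w)]
      gcongr S 1 * (?_ * _)
      exact sq_le_sq.2 hρ
    simp only [dotProduct_psiTilde_mulVec, ← reflectionCoeff_mul_one_add hz,
      ← reflectionCoeff_mul_one_add hw, cons_val, mul_assoc (reflectionCoeff w), hscale]
    linarith

end PsiTilde

theorem psiTilde_negdef_robust_general {c₂ h cmin cmax zmax c z : ℝ} {S : Fin 4 → ℝ}
    (hS_nonneg : 0 ≤ S 1) (hS_le : S 1 ≤ S 0)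
    (hmin : NegDef (psiTilde c₂ h S cmin zmax)) (hmax : NegDef (psiTilde c₂ h S cmax zmax))
    (hc : c ∈ Set.Icc cmin cmax) (hz : z ≠ -1)
    (hρ : |reflectionCoeff z| ≤ |reflectionCoeff zmax|) :
    NegDef (psiTilde c₂ h S c z) := by
  have hΨc : NegDef (psiTilde c₂ h S c zmax) := by
    rw [← segment_eq_Icc (hc.1.trans hc.2)] at hc
    exact NegDef.of_convexOn (M := fun u => psiTilde c₂ h S u zmax)
      (convexOn_dotProduct_psiTilde_mulVec hS_le) (Set.mem_univ _) (Set.mem_univ _) hmin hmax hc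
  exact hΨc.psiTilde_of_abs_reflectionCoeff_le hS_nonneg hz hρ

/-- Finite-dimensional core of the robustness theorem: if the stability matrix
`Ψ̃(c,z) = HᵀSH − GᵀSG` is negative definite at the two extreme speeds `c_min, c_max` and
at the worst-case reflection coefficient `z_max` (whose modulus `δ_max ≥ 1` dominates over
the uncertainty set `D`), then `Ψ̃(c,z)` is negative definite for every
`c ∈ [c_min, c_max]` and every `z ∈ D`. -/
theorem psiTilde_negdef_robust
    (c₂ h S₁ S₂ S₃ S₄ cmin cmax : ℝ) (hc₂ : 0 < c₂)
    (hS₁ : 0 < S₁) (hS₂ : 0 < S₂) (hS₃ : 0 < S₃) (hS₄ : 0 < S₄)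
    (hcmin : 0 < cmin) (hminmax : cmin ≤ cmax)
    (D : Set ℝ) (hD : (-1 : ℝ) ∉ D)
    (zmax : ℝ) (hzmax : zmax ∈ D)
    (hmax : ∀ z ∈ D, |(1 - z) / (1 + z)| ≤ |(1 - zmax) / (1 + zmax)|)
    (hδ : 1 ≤ |(1 - zmax) / (1 + zmax)|)
    (Ψ : ℝ → ℝ → Matrix (Fin 4) (Fin 4) ℝ)
    (hΨ : ∀ c z : ℝ, Ψ c z =
      (!![0, c, 1, 0;
          1 - z, 0, 0, 0;
          0, 0, 0, 1 - c₂ * h;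
          0, -c₂, 1, 0] : Matrix (Fin 4) (Fin 4) ℝ)ᵀ *
        Matrix.diagonal ![S₁, S₂, S₃, S₄] *
        !![0, c, 1, 0;
           1 - z, 0, 0, 0;
           0, 0, 0, 1 - c₂ * h;
           0, -c₂, 1, 0] -
      (!![1 + z, 0, 0, 0;
          0, -c, 1, 0;
          0, c₂, 1, 0;
          0, 0, 0, 1 + c₂ * h] : Matrix (Fin 4) (Fin 4) ℝ)ᵀ *
        Matrix.diagonal ![S₁, S₂, S₃, S₄] *
        !![1 + z, 0, 0, 0;
           0, -c, 1, 0;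
           0, c₂, 1, 0;
           0, 0, 0, 1 + c₂ * h])
    (hmin : NegDef (Ψ cmin zmax)) (hmaxc : NegDef (Ψ cmax zmax)) :
    ∀ c ∈ Set.Icc cmin cmax, ∀ z ∈ D, NegDef (Ψ c z) := by
  obtain rfl : Ψ = psiTilde c₂ h ![S₁, S₂, S₃, S₄] := funext₂ hΨ
  exact fun c hc z hz => psiTilde_negdef_robust_general hS₂.le
    (weight_one_le_weight_zero_of_negDef_psiTilde hS₂.le hδ hmin) hmin hmaxc hc
    (ne_of_mem_of_not_mem hz hD) (hmax z hz)
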